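/- No deductron with 6 inputs, 1 memory cell and 2 outputs correctly decodes every strict valid W-image; that is, for every choice of W1 ∈ ℝ^{2×6}, b1 ∈ ℝ^{2}, W2 ∈ ℝ^{2×1}, b2 ∈ ℝ^{2}, there exists a strict valid W-image c_0,…,c_{N−1} and an index t with 1 ≤ t ≤ N−1 such that the deductron's output o_t on the sliding-window input sequence differs from (1,0) if the image emits 'X' at t, from (0,1) if it emits 'O' at t, and from (0,0) otherwise. -/

import Mathlib

/-!
With a single memory cell the output at time `t` is a function of the one number `z t`, and the
recursion keeps `z t` in `{0, 1}` (`dedZ_eq_zero_or_one`). Hence at most two different outputs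
ever occur. The strict images `e1 e3 e2 e1` and `e3 e1 e2 e3` between them call for three: the
former emits nothing at position 1 and X at position 3, the latter emits O at position 3.
By the pigeonhole principle one of these three outputs is wrong.
-/

/-- The hard threshold activation: `S a = 1` if `a ≤ 0`, `S a = 0` if `a > 0`. -/
noncomputable def hardS (a : ℝ) : ℝ := if a ≤ 0 then 1 else 0

/-- States of the W-chain: `z` is the blank state `0`, and `e2p`, `e2m` are `e2⁺`, `e2⁻`. -/
inductive WState | z | e1 | e2p | e2m | e3
deriving DecidableEq

/-- The edge relation of the W-chain. -/
def wEdge : WState → WState → Prop := fun a b =>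
  a = b ∨
  (a = .z ∧ b = .e1) ∨ (a = .z ∧ b = .e3) ∨
  (a = .e1 ∧ b = .z) ∨ (a = .e1 ∧ b = .e3) ∨ (a = .e1 ∧ b = .e2p) ∨
  (a = .e2p ∧ b = .e3) ∨
  (a = .e3 ∧ b = .z) ∨ (a = .e3 ∧ b = .e1) ∨ (a = .e3 ∧ b = .e2m) ∨
  (a = .e2m ∧ b = .e1)

/-- The column labelling each state of the W-chain. -/
def wLabel : WState → (Fin 3 → ℝ)
  | .z => ![0, 0, 0]
  | .e1 => ![1, 0, 0]
  | .e2p => ![0, 1, 0]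
  | .e2m => ![0, 1, 0]
  | .e3 => ![0, 0, 1]

def col0 : Fin 3 → ℝ := ![0, 0, 0]
def colE1 : Fin 3 → ℝ := ![1, 0, 0]
def colE3 : Fin 3 → ℝ := ![0, 0, 1]

/-- `c 0, …, c (N-1)` is a valid W-image: the label sequence of a path in the W-chain
starting and ending in `{0, e1, e3}`. -/
def ValidWImage (N : ℕ) (c : ℕ → Fin 3 → ℝ) : Prop :=
  1 ≤ N ∧ ∃ s : ℕ → WState,
    (∀ t, t + 1 < N → wEdge (s t) (s (t + 1))) ∧
    (∀ t, t < N → c t = wLabel (s t)) ∧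
    (s 0 = .z ∨ s 0 = .e1 ∨ s 0 = .e3) ∧
    (s (N - 1) = .z ∨ s (N - 1) = .e1 ∨ s (N - 1) = .e3)

/-- An X-start occurs at position `t ≥ 1`. -/
def XStart (c : ℕ → Fin 3 → ℝ) (t : ℕ) : Prop :=
  1 ≤ t ∧ c t = colE3 ∧ (c (t - 1) = col0 ∨ c (t - 1) = colE1)

/-- An O-start occurs at position `t ≥ 1`. -/
def OStart (c : ℕ → Fin 3 → ℝ) (t : ℕ) : Prop :=
  1 ≤ t ∧ c t = colE1 ∧ (c (t - 1) = col0 ∨ c (t - 1) = colE3)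

/-- The image emits 'X' at position `t`: `c t = e1` and the most recent start event at a
position `s ≤ t` is an X-start. -/
def EmitsX (c : ℕ → Fin 3 → ℝ) (t : ℕ) : Prop :=
  1 ≤ t ∧ c t = colE1 ∧ ∃ s, s ≤ t ∧ XStart c s ∧
    ∀ r, s < r → r ≤ t → ¬ XStart c r ∧ ¬ OStart c r

/-- The image emits 'O' at position `t`: `c t = e3` and the most recent start event at a
position `s ≤ t` is an O-start. -/
def EmitsO (c : ℕ → Fin 3 → ℝ) (t : ℕ) : Prop :=
  1 ≤ t ∧ c t = colE3 ∧ ∃ s, s ≤ t ∧ OStart c s ∧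
    ∀ r, s < r → r ≤ t → ¬ XStart c r ∧ ¬ OStart c r

/-- `u`-part of the hidden layer: first `m` coordinates of `S (W1 xₜ + b1)`. -/
noncomputable def dedU (m nin : ℕ) (W1 : Matrix (Fin (2 * m)) (Fin nin) ℝ)
    (b1 : Fin (2 * m) → ℝ) (x : ℕ → Fin nin → ℝ) (t : ℕ) (i : Fin m) : ℝ :=
  hardS ((∑ j, W1 ⟨i.val, by have := i.isLt; omega⟩ j * x t j) +
    b1 ⟨i.val, by have := i.isLt; omega⟩)

/-- `v`-part of the hidden layer: last `m` coordinates of `S (W1 xₜ + b1)`. -/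
noncomputable def dedV (m nin : ℕ) (W1 : Matrix (Fin (2 * m)) (Fin nin) ℝ)
    (b1 : Fin (2 * m) → ℝ) (x : ℕ → Fin nin → ℝ) (t : ℕ) (i : Fin m) : ℝ :=
  hardS ((∑ j, W1 ⟨m + i.val, by have := i.isLt; omega⟩ j * x t j) +
    b1 ⟨m + i.val, by have := i.isLt; omega⟩)

/-- The memory of the deductron: `z 0 = 0`, `z t = (1 − uₜ)(1 − vₜ) z (t−1) + uₜ`. -/
noncomputable def dedZ (m nin : ℕ) (W1 : Matrix (Fin (2 * m)) (Fin nin) ℝ)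
    (b1 : Fin (2 * m) → ℝ) (x : ℕ → Fin nin → ℝ) : ℕ → Fin m → ℝ
  | 0 => fun _ => 0
  | t + 1 => fun i =>
      (1 - dedU m nin W1 b1 x (t + 1) i) * (1 - dedV m nin W1 b1 x (t + 1) i) *
        dedZ m nin W1 b1 x t i + dedU m nin W1 b1 x (t + 1) i

/-- The output of the deductron: `oₜ = S (W2 zₜ + b2)`. -/
noncomputable def dedO (m nin nout : ℕ) (W1 : Matrix (Fin (2 * m)) (Fin nin) ℝ)
    (b1 : Fin (2 * m) → ℝ) (W2 : Matrix (Fin nout) (Fin m) ℝ) (b2 : Fin nout → ℝ)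
    (x : ℕ → Fin nin → ℝ) (t : ℕ) (i : Fin nout) : ℝ :=
  hardS ((∑ j, W2 i j * dedZ m nin W1 b1 x t j) + b2 i)

/-- The sliding-window input sequence of an image: `xₜ = (c (t−1), c t) ∈ {0,1}⁶`. -/
def slide (c : ℕ → Fin 3 → ℝ) (t : ℕ) (j : Fin 6) : ℝ :=
  if h : (j : ℕ) < 3 then c (t - 1) ⟨j, h⟩
  else c t ⟨(j : ℕ) - 3, by have := j.isLt; omega⟩

/-- A deductron with `m` memory cells, 6 inputs and 2 outputs correctly decodes
the W-language. -/
def DecodesW (m : ℕ) (W1 : Matrix (Fin (2 * m)) (Fin 6) ℝ) (b1 : Fin (2 * m) → ℝ)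
    (W2 : Matrix (Fin 2) (Fin m) ℝ) (b2 : Fin 2 → ℝ) : Prop :=
  ∀ N : ℕ, ∀ c : ℕ → Fin 3 → ℝ, ValidWImage N c →
    ∀ t, 1 ≤ t → t ≤ N - 1 →
      (EmitsX c t → (fun i => dedO m 6 2 W1 b1 W2 b2 (slide c) t i) = ![1, 0]) ∧
      (EmitsO c t → (fun i => dedO m 6 2 W1 b1 W2 b2 (slide c) t i) = ![0, 1]) ∧
      (¬ EmitsX c t → ¬ EmitsO c t →
        (fun i => dedO m 6 2 W1 b1 W2 b2 (slide c) t i) = ![0, 0])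

/-- A strict valid W-image: a valid W-image with no zero column and no two consecutive
columns equal. -/
def StrictValidWImage (N : ℕ) (c : ℕ → Fin 3 → ℝ) : Prop :=
  ValidWImage N c ∧ (∀ t, t < N → c t ≠ col0) ∧ (∀ t, t + 1 < N → c t ≠ c (t + 1))

/-- The memory of a deductron is `0` or `1` at all times, because `u` and `v` are. -/
theorem dedZ_eq_zero_or_one (m nin : ℕ) (W1 : Matrix (Fin (2 * m)) (Fin nin) ℝ)
    (b1 : Fin (2 * m) → ℝ) (x : ℕ → Fin nin → ℝ) (t : ℕ) (i : Fin m) :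
    dedZ m nin W1 b1 x t i = 0 ∨ dedZ m nin W1 b1 x t i = 1 := by
  induction t with
  | zero => left; rfl
  | succ t ih =>
    have hS : ∀ a : ℝ, hardS a = 0 ∨ hardS a = 1 := by
      intro a
      unfold hardS
      split_ifs <;> simp
    have hu : dedU m nin W1 b1 x (t + 1) i = 0 ∨ dedU m nin W1 b1 x (t + 1) i = 1 := hS _
    have hv : dedV m nin W1 b1 x (t + 1) i = 0 ∨ dedV m nin W1 b1 x (t + 1) i = 1 := hS _
    simp only [dedZ]
    rcases hu with hu | hu <;> rcases hv with hv | hv <;> rcases ih with ih | ih <;>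
      simp [hu, hv, ih]

/-- The outputs of a one-cell deductron agree whenever its memory contents agree. -/
theorem dedO_eq_of_dedZ_eq {nin nout : ℕ} (W1 : Matrix (Fin (2 * 1)) (Fin nin) ℝ)
    (b1 : Fin (2 * 1) → ℝ) (W2 : Matrix (Fin nout) (Fin 1) ℝ) (b2 : Fin nout → ℝ)
    {x y : ℕ → Fin nin → ℝ} {s t : ℕ}
    (h : dedZ 1 nin W1 b1 x s 0 = dedZ 1 nin W1 b1 y t 0) :
    (fun i => dedO 1 nin nout W1 b1 W2 b2 x s i) =
      fun i => dedO 1 nin nout W1 b1 W2 b2 y t i := by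
  funext i
  simp [dedO, h]

/-- A path of the W-chain whose first four labels are `e1 e3 e2 e1`. -/
def pathX : ℕ → WState
  | 0 => .e1
  | 1 => .e3
  | 2 => .e2m
  | _ => .e1

/-- A path of the W-chain whose first four labels are `e3 e1 e2 e3`. -/
def pathO : ℕ → WState
  | 0 => .e3
  | 1 => .e1
  | 2 => .e2p
  | _ => .e3

/-- The label sequence of `pathX`. -/
def imgX (t : ℕ) : Fin 3 → ℝ := wLabel (pathX t)

/-- The label sequence of `pathO`. -/
def imgO (t : ℕ) : Fin 3 → ℝ := wLabel (pathO t)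

theorem strict_imgX : StrictValidWImage 4 imgX := by
  refine ⟨⟨by norm_num, pathX, ?_, fun _ _ => rfl, by simp [pathX], by simp [pathX]⟩, ?_, ?_⟩
  · intro t ht
    have : t < 3 := by omega
    interval_cases t <;> simp [wEdge, pathX]
  · intro t ht
    interval_cases t <;> simp [imgX, pathX, wLabel, col0]
  · intro t ht
    have : t < 3 := by omega
    interval_cases t <;> simp [imgX, pathX, wLabel]

theorem strict_imgO : StrictValidWImage 4 imgO := by
  refine ⟨⟨by norm_num, pathO, ?_, fun _ _ => rfl, by simp [pathO], by simp [pathO]⟩, ?_, ?_⟩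
  · intro t ht
    have : t < 3 := by omega
    interval_cases t <;> simp [wEdge, pathO]
  · intro t ht
    interval_cases t <;> simp [imgO, pathO, wLabel, col0]
  · intro t ht
    have : t < 3 := by omega
    interval_cases t <;> simp [imgO, pathO, wLabel]

theorem emitsX_imgX_three : EmitsX imgX 3 := by
  refine ⟨by norm_num, by simp [imgX, pathX, wLabel, colE1], 1, by norm_num, ?_, ?_⟩
  · simp [XStart, imgX, pathX, wLabel, colE1, colE3]
  · intro r h1 h3
    interval_cases r <;>
      simp [XStart, OStart, imgX, pathX, wLabel, colE1, colE3, col0]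

theorem emitsO_imgO_three : EmitsO imgO 3 := by
  refine ⟨by norm_num, by simp [imgO, pathO, wLabel, colE3], 1, by norm_num, ?_, ?_⟩
  · simp [OStart, imgO, pathO, wLabel, colE1, colE3]
  · intro r h1 h3
    interval_cases r <;>
      simp [XStart, OStart, imgO, pathO, wLabel, colE1, colE3, col0]

theorem not_emitsX_imgX_one : ¬ EmitsX imgX 1 := by
  simp [EmitsX, imgX, pathX, wLabel, colE1]

theorem not_emitsO_imgX_one : ¬ EmitsO imgX 1 := by
  rintro ⟨-, -, s, hs, hO, -⟩
  interval_cases s <;> simp [OStart, imgX, pathX, wLabel, colE1] at hO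

/-- **1 memory cell is insufficient for the strict W-language.** For every deductron
with 6 inputs, 1 memory cell and 2 outputs there is a strict valid W-image and a
position `t` at which the output differs from the required decoding. -/
theorem deductron_one_cell_cannot_decode_strict_W :
    ∀ (W1 : Matrix (Fin (2 * 1)) (Fin 6) ℝ) (b1 : Fin (2 * 1) → ℝ)
      (W2 : Matrix (Fin 2) (Fin 1) ℝ) (b2 : Fin 2 → ℝ),
      ∃ (N : ℕ) (c : ℕ → Fin 3 → ℝ), StrictValidWImage N c ∧
        ∃ t, 1 ≤ t ∧ t ≤ N - 1 ∧
          ((EmitsX c t ∧ (fun i => dedO 1 6 2 W1 b1 W2 b2 (slide c) t i) ≠ ![1, 0]) ∨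
           (EmitsO c t ∧ (fun i => dedO 1 6 2 W1 b1 W2 b2 (slide c) t i) ≠ ![0, 1]) ∨
           (¬ EmitsX c t ∧ ¬ EmitsO c t ∧
             (fun i => dedO 1 6 2 W1 b1 W2 b2 (slide c) t i) ≠ ![0, 0])) := by
  intro W1 b1 W2 b2
  by_contra hcon
  push Not at hcon
  obtain ⟨hX, -, -⟩ := hcon 4 imgX strict_imgX 3 (by norm_num) (by norm_num)
  obtain ⟨-, hO, -⟩ := hcon 4 imgO strict_imgO 3 (by norm_num) (by norm_num)
  obtain ⟨-, -, hN⟩ := hcon 4 imgX strict_imgX 1 (by norm_num) (by norm_num)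
  replace hX := hX emitsX_imgX_three
  replace hO := hO emitsO_imgO_three
  replace hN := hN not_emitsX_imgX_one not_emitsO_imgX_one
  -- Equality of any two of the three memory contents would identify two distinct outputs.
  have hXO : dedZ 1 6 W1 b1 (slide imgX) 3 0 ≠ dedZ 1 6 W1 b1 (slide imgO) 3 0 := fun h => by
    have := hX.symm.trans ((dedO_eq_of_dedZ_eq W1 b1 W2 b2 h).trans hO)
    simp at this
  have hXN : dedZ 1 6 W1 b1 (slide imgX) 3 0 ≠ dedZ 1 6 W1 b1 (slide imgX) 1 0 := fun h => by
    have := hX.symm.trans ((dedO_eq_of_dedZ_eq W1 b1 W2 b2 h).trans hN)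
    simp at this
  have hON : dedZ 1 6 W1 b1 (slide imgO) 3 0 ≠ dedZ 1 6 W1 b1 (slide imgX) 1 0 := fun h => by
    have := hO.symm.trans ((dedO_eq_of_dedZ_eq W1 b1 W2 b2 h).trans hN)
    simp at this
  rcases dedZ_eq_zero_or_one 1 6 W1 b1 (slide imgX) 3 0 with h1 | h1 <;>
  rcases dedZ_eq_zero_or_one 1 6 W1 b1 (slide imgO) 3 0 with h2 | h2 <;>
  rcases dedZ_eq_zero_or_one 1 6 W1 b1 (slide imgX) 1 0 with h3 | h3 <;>
  simp_all
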